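/- arXiv:math/0402442 — 2 statements merged into one kernel-verified Lean document; each statement's English description precedes it below -/
import Mathlib

section
/- Let P be a Polish space and let X ⊆ P be a Borel set such that the subspace X is countable dense homogeneous. Then X is a Gδ subset of P; in particular, the subspace X is completely metrizable (Polish). -/
/-- A topological space is countable dense homogeneous (CDH) if for any two countable
dense subsets `D`, `D'` there is a self-homeomorphism taking `D` onto `D'`. -/
def IsCDH (X : Type*) [TopologicalSpace X] : Prop :=
  ∀ D D' : Set X, D.Countable → Dense D → D'.Countable → Dense D' →
    ∃ h : X ≃ₜ X, h '' D = D'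

/-!
A CDH space `X` that is Borel in a completion is a Baire space. Otherwise its largest meagre open
set `U` is nonempty and, like every set invariant under homeomorphisms, is met in the same way by
all countable dense sets up to homeomorphism. As `U` is meagre it has a countable dense subset
that is `Gδ`, so by homogeneity all countable subsets of `U` are `Gδ`; since a Cantor set has
countable subsets which are not `Gδ`, `U` is countable. But then a countable dense set containing
`U` cannot be mapped onto one that misses a point of `U`.

A Borel Baire space is residual in its completion, hence has a dense Polish subspace. By
homogeneity every countable subset of `X` is contained in a Polish subspace of `X`, that is, in a
`Gδ` subset of the completion inside `X`. A coanalytic set with this property is `Gδ`, by a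
Baire category argument that goes back to Hurewicz.
-/

open Set Filter Topology TopologicalSpace MeasureTheory
open scoped Uniformity

/-! ### Polish subspaces and `Gδ` sets -/

section Polish

variable {X P : Type*} [TopologicalSpace X] [TopologicalSpace P] {e : X → P}

theorem polishSpace_of_isGδ_range [PolishSpace P] (he : IsEmbedding e) (hG : IsGδ (range e)) :
    PolishSpace X := by
  obtain ⟨O, hO, hOe⟩ := isGδ_iff_eq_iInter_nat.1 hG
  have : ∀ n, PolishSpace (O n) := fun n => (hO n).polishSpace
  have heO : ∀ x n, e x ∈ O n := fun x => mem_iInter.1 (hOe ▸ mem_range_self x)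
  let diag : X → ∀ n, O n := fun x n => ⟨e x, heO x n⟩
  have hdiag : IsEmbedding diag := by
    have hcont : Continuous diag := continuous_pi fun n => he.continuous.subtype_mk _
    exact .of_comp hcont (g := fun g : ∀ n, O n => (g 0 : P)) (by fun_prop) he
  have hrange : range diag = ⋂ n, {g | (g n : P) = g 0} := by
    refine Subset.antisymm (range_subset_iff.2 fun x => mem_iInter.2 fun n => rfl) fun g hg => ?_
    have hg : ∀ n, (g n : P) = g 0 := fun n => mem_iInter.1 hg n
    obtain ⟨x, hx⟩ : (g 0 : P) ∈ range e := hOe ▸ mem_iInter.2 fun n => hg n ▸ (g n).2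
    exact ⟨x, funext fun n => Subtype.ext (hx.trans (hg n).symm)⟩
  have hclosed : IsClosed (range diag) :=
    hrange ▸ isClosed_iInter fun n => isClosed_eq (by fun_prop) (by fun_prop)
  exact IsClosedEmbedding.polishSpace ⟨hdiag, hclosed⟩

theorem isGδ_setOfPred_comap_nhds_prod_self_le_uniformity {X : Type*} [UniformSpace X]
    [(𝓤 X).IsCountablyGenerated] (e : X → P) :
    IsGδ {p | comap e (𝓝 p) ×ˢ comap e (𝓝 p) ≤ 𝓤 X} := by
  obtain ⟨V, hV⟩ := (𝓤 X).exists_antitone_basis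
  simp only [(((nhds_basis_opens _).comap e).prod_self.le_basis_iff hV.toHasBasis),
    forall_prop_of_true, ofPred_forall]
  refine .iInter fun n => IsOpen.isGδ <| isOpen_iff_mem_nhds.2 fun p => ?_
  rintro ⟨U, ⟨hpU, hU⟩, hUV⟩
  filter_upwards [hU.mem_nhds hpU] with q hqU using ⟨U, ⟨hqU, hU⟩, hUV⟩

theorem isGδ_range_of_isEmbedding [IsCompletelyMetrizableSpace X] [T6Space P]
    (he : IsEmbedding e) : IsGδ (range e) := by
  let := upgradeIsCompletelyMetrizable X
  suffices range e =
      closure (range e) ∩ {p | comap e (𝓝 p) ×ˢ comap e (𝓝 p) ≤ 𝓤 X} by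
    rw [this]
    exact isClosed_closure.isGδ.inter (isGδ_setOfPred_comap_nhds_prod_self_le_uniformity e)
  refine Subset.antisymm (range_subset_iff.2 fun x => ?_) ?_
  · refine ⟨subset_closure (mem_range_self x), ?_⟩
    rw [mem_ofPred_eq, ← he.nhds_eq_comap]
    exact cauchy_nhds.2
  · rintro p ⟨hp, hpV⟩
    have hne : (comap e (𝓝 p)).NeBot := comap_neBot_iff_frequently.2 <| by
      simpa only [mem_range] using mem_closure_iff_frequently.1 hp
    obtain ⟨x, hx⟩ := CompleteSpace.complete ⟨hne, hpV⟩
    have hex : Tendsto e (comap e (𝓝 p)) (𝓝 (e x)) := (he.continuous.tendsto x).mono_left hx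
    exact ⟨x, tendsto_nhds_unique hex tendsto_comap⟩

end Polish

/-! ### Hurewicz's criterion for coanalytic sets -/

section Hurewicz

variable {P Z ι : Type*} [TopologicalSpace P] [TopologicalSpace Z]

/-- The set `s` can be separated from `t` by a `Gδ` set containing `s`. The notion is the analogue
of `MeasureTheory.MeasurablySeparable`; it is not symmetric. -/
def GδSeparable (s t : Set P) : Prop :=
  ∃ u, s ⊆ u ∧ Disjoint t u ∧ IsGδ u

namespace GδSeparable

variable {s t t' : Set P}

theorem isGδ (h : GδSeparable s sᶜ) : IsGδ s := by
  obtain ⟨u, hsu, hdisj, hu⟩ := h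
  rwa [hsu.antisymm (disjoint_compl_left_iff_subset.1 hdisj)]

theorem of_disjoint_closure (h : Disjoint s (closure t)) : GδSeparable s t :=
  ⟨(closure t)ᶜ, h.subset_compl_right, disjoint_compl_right.mono_left subset_closure,
    isClosed_closure.isOpen_compl.isGδ⟩

theorem mono_right (h : GδSeparable s t) (ht : t' ⊆ t) : GδSeparable s t' :=
  h.imp fun _ ⟨hsu, hdisj, hu⟩ => ⟨hsu, hdisj.mono_left ht, hu⟩

theorem biUnion_right {I : Set ι} (hI : I.Countable) {t : ι → Set P}
    (h : ∀ i ∈ I, GδSeparable s (t i)) : GδSeparable s (⋃ i ∈ I, t i) := by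
  choose! u hsu hdisj hu using h
  exact ⟨⋂ i ∈ I, u i, subset_iInter₂ hsu, disjoint_iUnion₂_left.2 fun i hi =>
    (hdisj i hi).mono_right (biInter_subset_of_mem hi), .biInter hI hu⟩

theorem union_right (h : GδSeparable s t) (h' : GδSeparable s t') : GδSeparable s (t ∪ t') := by
  obtain ⟨u, hsu, hdisj, hu⟩ := h
  obtain ⟨u', hsu', hdisj', hu'⟩ := h'
  exact ⟨u ∩ u', subset_inter hsu hsu', disjoint_union_left.2
    ⟨hdisj.mono_right inter_subset_left, hdisj'.mono_right inter_subset_right⟩, hu.inter hu'⟩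

end GδSeparable

theorem exists_countable_subset_forall_isGδ_dense_preimage [SecondCountableTopology Z]
    [BaireSpace Z] {f : Z → P} (hf : Continuous f) {s : Set P}
    (hs : ∀ V, IsOpen V → V.Nonempty → ¬ Disjoint s (closure (f '' V))) :
    ∃ Q ⊆ s, Q.Countable ∧ ∀ G, IsGδ G → Q ⊆ G → Dense (f ⁻¹' G) := by
  have hex : ∀ V : countableBasis Z, ∃ q ∈ s, q ∈ closure (f '' V) := fun V =>
    not_disjoint_iff.1
      (hs V (isOpen_of_mem_countableBasis V.2) (nonempty_of_mem_countableBasis V.2))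
  choose q hqs hqV using hex
  refine ⟨range q, range_subset_iff.2 hqs, countable_range q, ?_⟩
  intro G hG hqG
  obtain ⟨O, hO, rfl⟩ := isGδ_iff_eq_iInter_nat.1 hG
  rw [preimage_iInter]
  refine dense_iInter_of_isOpen (fun n => (hO n).preimage hf) fun n => ?_
  refine (isBasis_countableBasis Z).dense_iff.2 fun V hV _ => ?_
  have hqO : q ⟨V, hV⟩ ∈ O n := mem_iInter.1 (hqG (mem_range_self _)) n
  obtain ⟨_, hzO, z, hzV, rfl⟩ := mem_closure_iff.1 (hqV ⟨V, hV⟩) (O n) (hO n) hqO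
  exact ⟨z, hzV, hzO⟩

theorem exists_isOpen_gδSeparable_image_maximal [SecondCountableTopology Z] (f : Z → P)
    (s : Set P) : ∃ W, IsOpen W ∧ GδSeparable s (f '' W) ∧
      ∀ V, IsOpen V → GδSeparable s (f '' V) → V ⊆ W := by
  let 𝒱 : Set (Set Z) := {V | IsOpen V ∧ GδSeparable s (f '' V)}
  refine ⟨⋃₀ 𝒱, isOpen_sUnion fun V hV => hV.1, ?_, fun V hV hsV => subset_sUnion_of_mem ⟨hV, hsV⟩⟩
  obtain ⟨T, hTc, hT𝒱, hT⟩ := isOpen_sUnion_countable 𝒱 fun V hV => hV.1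
  rw [← hT, image_sUnion, sUnion_image]
  exact .biUnion_right hTc fun V hV => (hT𝒱 hV).2

theorem gδSeparable_range_of_forall_countable [PolishSpace Z] {f : Z → P} (hf : Continuous f)
    {s : Set P} (hs : ∀ Q ⊆ s, Q.Countable → ∃ G, IsGδ G ∧ Q ⊆ G ∧ Disjoint G (range f)) :
    GδSeparable s (range f) := by
  obtain ⟨W, hW, hsW, hWmax⟩ := exists_isOpen_gδSeparable_image_maximal f s
  suffices hWuniv : W = univ by rwa [hWuniv, image_univ] at hsW
  by_contra hne
  have : Nonempty ↥Wᶜ := (nonempty_compl.2 hne).to_subtype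
  have : PolishSpace ↥Wᶜ := hW.isClosed_compl.polishSpace
  obtain ⟨Q, hQs, hQ, hdense⟩ := exists_countable_subset_forall_isGδ_dense_preimage
    (f := f ∘ ((↑) : ↥Wᶜ → Z)) (by fun_prop) (s := s) <| by
      rintro _ hV ⟨⟨z, hzW⟩, hz⟩ hdisj
      obtain ⟨V, hVo, rfl⟩ := isOpen_induced_iff.1 hV
      rw [image_comp, Subtype.image_preimage_coe] at hdisj
      have hsV := (hsW.union_right (.of_disjoint_closure hdisj)).mono_right (t' := f '' V) <| by
        rw [← image_union]
        exact image_mono fun y hy => (em (y ∈ W)).imp id fun hyW => ⟨hyW, hy⟩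
      exact hzW (hWmax V hVo hsV hz)
  obtain ⟨G, hG, hQG, hGf⟩ := hs Q hQs hQ
  obtain ⟨z, hz⟩ := (hdense G hG hQG).nonempty
  exact disjoint_left.1 hGf hz (mem_range_self _)

theorem isGδ_of_analyticSet_compl {s : Set P} (hA : AnalyticSet sᶜ)
    (hs : ∀ Q ⊆ s, Q.Countable → ∃ G, IsGδ G ∧ Q ⊆ G ∧ G ⊆ s) : IsGδ s := by
  obtain ⟨Z, _, _, f, hf, hfs⟩ := analyticSet_iff_exists_polishSpace_range.1 hA
  refine GδSeparable.isGδ (hfs ▸ gδSeparable_range_of_forall_countable hf fun Q hQs hQ => ?_)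
  obtain ⟨G, hG, hQG, hGs⟩ := hs Q hQs hQ
  exact ⟨G, hG, hQG, hfs ▸ disjoint_compl_right.mono_left hGs⟩

end Hurewicz

/-! ### Baire category -/

section Meagre

variable {X P : Type*} [TopologicalSpace X] [TopologicalSpace P]

variable (X) in
/-- The union of all meagre open subsets of `X`. In a second countable space it is the largest
meagre open set, and it is empty exactly when `X` is a Baire space. -/
def meagreCore : Set X :=
  ⋃₀ {V | IsOpen V ∧ IsMeagre V}

theorem isOpen_meagreCore : IsOpen (meagreCore X) :=
  isOpen_sUnion fun _ hV => hV.1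

theorem subset_meagreCore {V : Set X} (hV : IsOpen V) (hVm : IsMeagre V) : V ⊆ meagreCore X :=
  subset_sUnion_of_mem ⟨hV, hVm⟩

theorem isMeagre_meagreCore [SecondCountableTopology X] : IsMeagre (meagreCore X) := by
  obtain ⟨T, hTc, hTs, hT⟩ := isOpen_sUnion_countable {V : Set X | IsOpen V ∧ IsMeagre V}
    fun _ hV => hV.1
  rw [meagreCore, ← hT, sUnion_eq_biUnion]
  exact isMeagre_biUnion hTc fun V hV => (hTs hV).2

theorem preimage_meagreCore_subset {f : X → P} (hf : Continuous f) (hfo : IsOpenMap f) :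
    f ⁻¹' meagreCore P ⊆ meagreCore X := by
  rintro x ⟨V, ⟨hV, hVm⟩, hx⟩
  exact subset_meagreCore (hV.preimage hf) (hVm.preimage_of_isOpenMap hf hfo) hx

theorem preimage_meagreCore_of_homeomorph (h : X ≃ₜ P) : h ⁻¹' meagreCore P = meagreCore X := by
  refine (preimage_meagreCore_subset h.continuous h.isOpenMap).antisymm ?_
  have := preimage_mono (f := h) (preimage_meagreCore_subset h.symm.continuous h.symm.isOpenMap)
  rwa [← preimage_comp, h.symm_comp_self, preimage_id] at this

theorem baireSpace_of_meagreCore_eq_empty (hX : meagreCore X = ∅) : BaireSpace X where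
  baire_property O hO hOd := by
    have hmeagre : IsMeagre (⋂ n, O n)ᶜ := by
      rw [IsMeagre, compl_compl]
      exact countable_iInter_mem.2 fun n => residual_of_dense_open (hO n) (hOd n)
    rw [← compl_compl (⋂ n, O n), ← interior_eq_empty_iff_dense_compl, ← subset_empty_iff, ← hX]
    exact subset_meagreCore isOpen_interior (hmeagre.mono interior_subset)

theorem exists_nat_isOpen_dense_of_isMeagre {s : Set X} (hs : IsMeagre s) :
    ∃ O : ℕ → Set X, (∀ n, IsOpen (O n)) ∧ (∀ n, Dense (O n)) ∧ Disjoint s (⋂ n, O n) := by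
  obtain ⟨S, hSo, hSd, hS, hsS⟩ := mem_residual_iff.1 hs
  obtain ⟨O, hO⟩ := (hS.insert univ).exists_eq_range (insert_nonempty _ _)
  have hOS : ∀ n, O n = univ ∨ O n ∈ S := fun n => hO.symm.subset (mem_range_self n)
  refine ⟨O, fun n => ?_, fun n => ?_, ?_⟩
  · exact (hOS n).elim (fun h => h ▸ isOpen_univ) (hSo _)
  · exact (hOS n).elim (fun h => h ▸ dense_univ) (hSd _)
  · rw [← sInter_range, ← hO, sInter_insert, univ_inter]
    exact disjoint_left.2 fun x hxs hx => hsS hx hxs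

theorem not_isMeagre_of_isOpen_singleton {x : X} (hx : IsOpen {x}) : ¬ IsMeagre {x} := by
  intro hm
  obtain ⟨S, -, hSd, -, hS⟩ := mem_residual_iff.1 hm
  refine hS (mem_sInter.2 fun t ht => ?_) rfl
  obtain ⟨y, rfl, hyt⟩ := (hSd t ht).inter_open_nonempty {x} hx (singleton_nonempty x)
  exact hyt

theorem nhdsNE_neBot_of_mem_meagreCore {x : X} (hx : x ∈ meagreCore X) : (𝓝[≠] x).NeBot := by
  obtain ⟨V, ⟨-, hV⟩, hxV⟩ := hx
  rw [neBot_iff, Ne, ← isOpen_singleton_iff_punctured_nhds]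
  exact fun ho => not_isMeagre_of_isOpen_singleton ho (hV.mono (singleton_subset_iff.2 hxV))

theorem isMeagre_of_countable [T1Space X] [PerfectSpace X] {s : Set X} (hs : s.Countable) :
    IsMeagre s := by
  rw [← biUnion_of_singleton s]
  exact isMeagre_biUnion hs fun x _ =>
    residual_of_dense_open isOpen_compl_singleton (dense_compl_singleton x)

theorem tendsto_residual_of_isDenseInducing {e : X → P} (he : IsDenseInducing e) :
    Tendsto e (residual X) (residual P) := by
  refine le_countableGenerate_iff_of_countableInterFilter.2 ?_
  rintro O ⟨hO, hOd⟩
  refine residual_of_dense_open (hO.preimage he.continuous) (he.dense_image.1 ?_)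
  rw [image_preimage_eq_inter_range]
  exact hOd.inter_of_isOpen_left he.dense hO

theorem range_mem_residual_of_isDenseInducing [BaireSpace X] {e : X → P}
    (he : IsDenseInducing e) (hm : BaireMeasurableSet (range e)) : range e ∈ residual P := by
  obtain ⟨W, hW, hWe⟩ := hm.compl.residualEq_isOpen
  have hWm : IsMeagre (e ⁻¹' W) := by
    filter_upwards [tendsto_residual_of_isDenseInducing he |>.eventually hWe.mem_iff] with x hx hxW
    exact hx.2 hxW (mem_range_self x)
  have hWempty : W = ∅ := by
    by_contra hne
    obtain ⟨_, hxW, x, rfl⟩ :=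
      he.dense.inter_open_nonempty W hW (nonempty_iff_ne_empty.2 hne)
    exact not_isMeagre_of_isOpen (hW.preimage he.continuous) ⟨x, hxW⟩ hWm
  filter_upwards [hWe.mem_iff] with y hy
  simpa [hWempty] using hy

end Meagre

/-! ### Countable `Gδ` sets -/

section CountableGδ

variable {X : Type*} [TopologicalSpace X]

theorem isGδ_of_subset_countable_isGδ [T1Space X] {s t : Set X} (ht : t.Countable)
    (htG : IsGδ t) (hst : s ⊆ t) : IsGδ s := by
  have hs : s = t ∩ (t \ s)ᶜ := by
    rw [← sdiff_eq, sdiff_sdiff_right_self, inter_eq_right.2 hst]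
  rw [hs]
  exact htG.inter (ht.mono sdiff_subset).isGδ_compl

theorem isGδ_of_forall_finite_sdiff {ι : Type*} [Countable ι] [T1Space X] [FirstCountableTopology X]
    {E U : Set X} {O : ι → Set X} (hU : IsGδ U) (hEU : E ⊆ U) (hO : ∀ i, IsOpen (O i))
    (hUO : Disjoint U (⋂ i, O i)) (hfin : ∀ i, (E \ O i).Finite) : IsGδ E := by
  have hE : E = U ∩ ⋂ i, (O i ∪ E \ O i) := by
    refine Subset.antisymm (subset_inter hEU (subset_iInter fun i x hx => ?_)) ?_
    · exact (em (x ∈ O i)).imp id fun h => ⟨hx, h⟩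
    · rintro x ⟨hxU, hx⟩
      by_contra hxE
      refine disjoint_left.1 hUO hxU (mem_iInter.2 fun i => ?_)
      exact (mem_iInter.1 hx i).resolve_right fun h => hxE h.1
  rw [hE]
  exact hU.inter (.iInter fun i => (hO i).isGδ.union (hfin i).isGδ)

theorem exists_countable_isGδ_subset_closure [SecondCountableTopology X] [T1Space X] {U : Set X}
    (hU : IsOpen U) (hUm : IsMeagre U) :
    ∃ E ⊆ U, E.Countable ∧ IsGδ E ∧ U ⊆ closure E := by
  obtain ⟨O, hO, hOd, hUO⟩ := exists_nat_isOpen_dense_of_isMeagre hUm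
  let ℬ := {B : countableBasis X // (B.1 ∩ U).Nonempty}
  have : Countable (countableBasis X) := (countable_countableBasis X).to_subtype
  have : Encodable ℬ := .ofCountable ℬ
  have hex : ∀ B : ℬ, ∃ x ∈ B.1.1 ∩ U, ∀ n ≤ Encodable.encode B, x ∈ O n := by
    intro B
    have hdense : Dense (⋂₀ (O '' Iic (Encodable.encode B))) :=
      ((finite_Iic _).image O).dense_sInter (forall_mem_image.2 fun n _ => hO n)
        (forall_mem_image.2 fun n _ => hOd n)
    obtain ⟨x, hxB, hx⟩ := hdense.inter_open_nonempty _
      ((isOpen_of_mem_countableBasis B.1.2).inter hU) B.2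
    exact ⟨x, hxB, fun n hn => hx _ (mem_image_of_mem O hn)⟩
  choose x hxB hxO using hex
  have hxU : range x ⊆ U := range_subset_iff.2 fun B => (hxB B).2
  refine ⟨range x, hxU, countable_range x, ?_, ?_⟩
  · refine isGδ_of_forall_finite_sdiff hU.isGδ hxU hO hUO fun n => ?_
    have hfin : {B : ℬ | Encodable.encode B < n}.Finite :=
      (finite_lt_nat n).preimage Encodable.encode_injective.injOn
    refine (hfin.image x).subset ?_
    rintro _ ⟨⟨B, rfl⟩, hB⟩
    exact mem_image_of_mem x (not_le.1 fun hn => hB (hxO B n hn))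
  · refine fun y hyU => (isBasis_countableBasis X).mem_closure_iff.2 fun B hB hyB => ?_
    have hxBU := hxB ⟨⟨B, hB⟩, y, hyB, hyU⟩
    exact ⟨_, hxBU.1, mem_range_self _⟩

theorem perfectSpace_pi {ι : Type*} [Infinite ι] {Y : ι → Type*} [∀ i, TopologicalSpace (Y i)]
    [∀ i, Nontrivial (Y i)] : PerfectSpace (∀ i, Y i) := by
  classical
  refine perfectSpace_iff_forall_not_isolated.2 fun y => ?_
  choose z hz using fun i => exists_ne (y i)
  refine Tendsto.neBot (f := fun i => Function.update y i (z i)) (x := cofinite) ?_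
  refine tendsto_nhdsWithin_iff.2 ⟨tendsto_pi_nhds.2 fun i => ?_, .of_forall fun i => ?_⟩
  · refine tendsto_const_nhds.congr' ?_
    filter_upwards [eventually_cofinite_ne i] with j hj
    exact (Function.update_of_ne hj.symm _ _).symm
  · exact fun h => hz i (by simpa using congrFun h i)

theorem exists_polishSpace_le {X : Type*} [τ : TopologicalSpace X] [SecondCountableTopology X]
    [MeasurableSpace X] [OpensMeasurableSpace X] [StandardBorelSpace X] :
    ∃ t ≤ τ, @PolishSpace X t := by
  obtain ⟨t₀, _, _⟩ := StandardBorelSpace.polish (α := X)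
  obtain ⟨t, -, hid, ht⟩ :=
    Measurable.exists_continuous (t := t₀) (tβ := τ) (f := @id X) measurable_id
  exact ⟨t, continuous_id_iff_le.1 hid, ht⟩

variable [MeasurableSpace X] [OpensMeasurableSpace X] [StandardBorelSpace X]
  [SecondCountableTopology X]

theorem exists_nat_bool_continuous_injective [Uncountable X] :
    ∃ f : (ℕ → Bool) → X, Continuous f ∧ Function.Injective f := by
  obtain ⟨t, htle, ht⟩ := exists_polishSpace_le (X := X)
  obtain ⟨f, -, hf, hfinj⟩ := @IsClosed.exists_nat_bool_injection_of_not_countable X t ht univ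
    isClosed_univ not_countable_univ
  exact ⟨f, continuous_le_rng htle hf, hfinj⟩

theorem countable_of_forall_countable_isGδ (hX : ∀ C : Set X, C.Countable → IsGδ C) :
    Countable X := by
  by_contra hunc
  have : Uncountable X := not_countable_iff.1 hunc
  obtain ⟨f, hf, hfinj⟩ := exists_nat_bool_continuous_injective (X := X)
  obtain ⟨E, hE, hEd⟩ := exists_countable_dense (ℕ → Bool)
  have hEG : IsGδ E := by simpa [hfinj.preimage_image] using (hX _ (hE.image f)).preimage hf
  have : PerfectSpace (ℕ → Bool) := perfectSpace_pi
  exact not_isMeagre_of_isGδ_of_dense hEG hEd (isMeagre_of_countable hE)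

theorem countable_of_forall_countable_subset_isGδ {U : Set X} (hU : MeasurableSet U)
    (hUC : ∀ C ⊆ U, C.Countable → IsGδ C) : U.Countable := by
  have : StandardBorelSpace U := hU.standardBorel
  refine (countable_of_forall_countable_isGδ fun C hC => ?_).to_set
  rw [← preimage_image_eq C Subtype.val_injective]
  exact (hUC _ (Subtype.coe_image_subset U C) (hC.image _)).preimage continuous_subtype_val

end CountableGδ

/-! ### Countable dense homogeneous spaces -/

namespace IsCDH

variable {X : Type*} [TopologicalSpace X]

theorem exists_polishSpace_superset (hX : IsCDH X) {S : Set X} [PolishSpace S] (hS : Dense S)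
    {Q : Set X} (hQ : Q.Countable) : ∃ S', Q ⊆ S' ∧ PolishSpace S' := by
  obtain ⟨D, hDS, hD, hDd⟩ := hS.exists_countable_dense_subset
  obtain ⟨h, hh⟩ := hX D (D ∪ Q) hD hDd (hD.union hQ) (hDd.mono subset_union_left)
  refine ⟨h '' S, ?_, (h.image S).symm.isClosedEmbedding.polishSpace⟩
  exact (hh ▸ subset_union_right).trans (image_mono hDS)

section SeparableT1

variable [SeparableSpace X] [T1Space X] {U : Set X}

theorem isGδ_of_countable_of_subset (hX : IsCDH X) (hU : ∀ h : X ≃ₜ X, h ⁻¹' U = U) {E : Set X}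
    (hE : E.Countable) (hEG : IsGδ E) (hUE : U ⊆ closure E) {C : Set X} (hC : C.Countable)
    (hCU : C ⊆ U) : IsGδ C := by
  obtain ⟨A, hA, hAd⟩ := exists_countable_dense X
  let D := E ∪ A \ U
  have hD : D.Countable := hE.union (hA.mono sdiff_subset)
  have hDd : Dense D := by
    have hAD : A ⊆ closure D := fun x hx => by
      by_cases hxU : x ∈ U
      · exact closure_mono subset_union_left (hUE hxU)
      · exact subset_closure (Or.inr ⟨hx, hxU⟩)
    exact dense_closure.1 (hAd.mono hAD)
  obtain ⟨h, hh⟩ := hX D (D ∪ C) hD hDd (hD.union hC) (hDd.mono subset_union_left)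
  have hCE : C ⊆ h '' E := fun c hc => by
    obtain ⟨d, hd | hd, rfl⟩ : c ∈ h '' D := hh ▸ Or.inr hc
    · exact mem_image_of_mem h hd
    · exact absurd ((hU h).subset (hCU hc)) hd.2
  refine isGδ_of_subset_countable_isGδ (hE.image h) ?_ hCE
  rw [h.image_eq_preimage_symm]
  exact hEG.preimage h.symm.continuous

theorem eq_empty_of_countable (hX : IsCDH X) (hU : ∀ h : X ≃ₜ X, h ⁻¹' U = U)
    (hUc : U.Countable) (hUne : ∀ x ∈ U, (𝓝[≠] x).NeBot) : U = ∅ := by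
  refine eq_empty_of_forall_notMem fun x hx => ?_
  have := hUne x hx
  obtain ⟨A, hA, hAd⟩ := exists_countable_dense X
  have hAU : (A ∪ U).Countable := hA.union hUc
  have hAUd : Dense (A ∪ U) := hAd.mono subset_union_left
  obtain ⟨h, hh⟩ := hX (A ∪ U) ((A ∪ U) \ {x}) hAU hAUd (hAU.mono sdiff_subset)
    (hAUd.sdiff_singleton x)
  obtain ⟨y, rfl⟩ := h.surjective x
  have hy : h y ∈ (A ∪ U) \ {h y} := hh ▸ mem_image_of_mem h (Or.inr ((hU h).subset hx))
  exact hy.2 rfl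

end SeparableT1

variable [MeasurableSpace X] [StandardBorelSpace X]

theorem baireSpace [OpensMeasurableSpace X] [SecondCountableTopology X] [T1Space X]
    (hX : IsCDH X) : BaireSpace X := by
  have hinv : ∀ h : X ≃ₜ X, h ⁻¹' meagreCore X = meagreCore X := preimage_meagreCore_of_homeomorph
  obtain ⟨E, -, hE, hEG, hEd⟩ :=
    exists_countable_isGδ_subset_closure (isOpen_meagreCore (X := X)) isMeagre_meagreCore
  have hcount : (meagreCore X).Countable :=
    countable_of_forall_countable_subset_isGδ isOpen_meagreCore.measurableSet fun C hCU hC =>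
      hX.isGδ_of_countable_of_subset hinv hE hEG hEd hC hCU
  exact baireSpace_of_meagreCore_eq_empty <|
    hX.eq_empty_of_countable hinv hcount fun _ => nhdsNE_neBot_of_mem_meagreCore

theorem isGδ_range_of_isDenseEmbedding [BorelSpace X] {P : Type*} [TopologicalSpace P]
    [PolishSpace P] (hX : IsCDH X) {e : X → P} (he : IsDenseEmbedding e) : IsGδ (range e) := by
  borelize P
  have : SecondCountableTopology X := he.isEmbedding.secondCountableTopology
  have : T1Space X := he.isEmbedding.t1Space
  have : BaireSpace X := hX.baireSpace
  have hrange : MeasurableSet (range e) :=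
    (he.continuous.measurable.measurableEmbedding he.injective).measurableSet_range
  obtain ⟨G, hGe, hG, hGd⟩ := mem_residual.1 <|
    range_mem_residual_of_isDenseInducing he.isDenseInducing hrange.baireMeasurableSet
  have himage : e '' (e ⁻¹' G) = G := image_preimage_eq_of_subset hGe
  have : PolishSpace (e ⁻¹' G) := by
    refine polishSpace_of_isGδ_range (he.isEmbedding.comp .subtypeVal) ?_
    rwa [range_comp, Subtype.range_coe, himage]
  have hdense : Dense (e ⁻¹' G) := he.isDenseInducing.dense_image.1 (himage.symm ▸ hGd)
  refine isGδ_of_analyticSet_compl hrange.compl.analyticSet fun Q hQe hQ => ?_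
  obtain ⟨S, hQS, hS⟩ := hX.exists_polishSpace_superset hdense (hQ.preimage he.injective)
  refine ⟨e '' S, ?_, (image_preimage_eq_of_subset hQe).symm.subset.trans (image_mono hQS),
    image_subset_range e S⟩
  simpa [range_comp] using
    isGδ_range_of_isEmbedding (he.isEmbedding.comp (.subtypeVal (p := (· ∈ S))))

theorem polishSpace [MetrizableSpace X] [SeparableSpace X] [BorelSpace X] (hX : IsCDH X) :
    PolishSpace X := by
  let := metrizableSpaceMetric X
  have he : IsDenseEmbedding ((↑) : X → UniformSpace.Completion X) :=
    UniformSpace.Completion.isDenseEmbedding_coe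
  exact polishSpace_of_isGδ_range he.isEmbedding (hX.isGδ_range_of_isDenseEmbedding he)

end IsCDH

theorem polish_of_borel_CDH_general {P : Type*} [TopologicalSpace P] [T6Space P] {X : Set P}
    [MetrizableSpace X] [SeparableSpace X] [MeasurableSpace X] [BorelSpace X]
    [StandardBorelSpace X] (hCDH : IsCDH X) : IsGδ X ∧ PolishSpace X := by
  have : PolishSpace X := hCDH.polishSpace
  exact ⟨by simpa using isGδ_range_of_isEmbedding (IsEmbedding.subtypeVal (p := (· ∈ X))), this⟩

/-- A Borel CDH subspace of a Polish space is `Gδ`, hence completely metrizable (Polish). -/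
theorem polish_of_borel_CDH
    (P : Type*) [TopologicalSpace P] [PolishSpace P]
    [MeasurableSpace P] [BorelSpace P] (X : Set P)
    (hB : MeasurableSet X)
    (hCDH : IsCDH ↥X) :
    IsGδ X ∧ PolishSpace ↥X := by
  have : StandardBorelSpace X := hB.standardBorel
  exact polish_of_borel_CDH_general hCDH
end

section
/- Let X ⊆ 2^ℕ be a Gδ subset of the Cantor space such that the countable power X^ℕ of the subspace X has more than one point. If X is compact then X^ℕ is homeomorphic to the Cantor space 2^ℕ, and if X is not compact then X^ℕ is homeomorphic to the Baire space ℕ^ℕ. -/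
/-!
`X^ℕ` is recognised by the characterizations of Brouwer (`2^ℕ` is the nonempty compact metrizable
zero-dimensional space without isolated points) and of Alexandrov–Urysohn (`ℕ^ℕ` is the nonempty
Polish zero-dimensional space whose compact sets have empty interior). Both are proved by cutting
the space into finer and finer clopen partitions. In the first case every cell is cut in two so
that the `n`-th clopen set of an enumeration is a union of cells of level `n + 1`; in the second a
cell is complete but not compact, hence not totally bounded, and can be cut into infinitely many
pieces of small diameter. A power `X^ℕ` has the required property because every neighbourhood of a
point leaves some coordinate unconstrained.
-/

open Set TopologicalSpace Topology Filter
open scoped ENNReal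

/-- A Cantor scheme whose `n`-th level, for every `n`, is a partition of the whole space into
nonempty clopen sets. -/
structure IsClopenScheme {Y β : Type*} [TopologicalSpace Y] (A : List β → Set Y) : Prop where
  nil_eq_univ : A [] = univ
  isClopen : ∀ l, IsClopen (A l)
  nonempty : ∀ l, (A l).Nonempty
  disjoint : CantorScheme.Disjoint A
  iUnion_cons : ∀ l, ⋃ b, A (b :: l) = A l

namespace IsClopenScheme

variable {Y β : Type*} [TopologicalSpace Y] {A : List β → Set Y}

theorem antitone (hA : IsClopenScheme A) : CantorScheme.Antitone A :=
  fun l b ↦ (subset_iUnion (fun c ↦ A (c :: l)) b).trans (hA.iUnion_cons l).subset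

theorem exists_forall_mem_res (hA : IsClopenScheme A) (y : Y) :
    ∃ x : ℕ → β, ∀ n, y ∈ A (PiNat.res x n) := by
  have exists_child (l : List β) (hl : y ∈ A l) : ∃ b, y ∈ A (b :: l) := by
    rwa [← hA.iUnion_cons, mem_iUnion] at hl
  have hnil : y ∈ A [] := hA.nil_eq_univ ▸ mem_univ y
  have : Nonempty β := (exists_child [] hnil).nonempty
  choose! child mem_child using exists_child
  let branch (n : ℕ) : List β := (fun l ↦ child l :: l)^[n] []
  have branch_succ (n : ℕ) : branch (n + 1) = child (branch n) :: branch n :=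
    Function.iterate_succ_apply' _ _ _
  have res_eq (n : ℕ) : PiNat.res (fun k ↦ child (branch k)) n = branch n := by
    induction n with
    | zero => rfl
    | succ n ih => rw [PiNat.res_succ, ih, branch_succ]
  refine ⟨fun k ↦ child (branch k), fun n ↦ ?_⟩
  rw [res_eq]
  induction n with
  | zero => exact hnil
  | succ n ih => exact branch_succ n ▸ mem_child _ ih

theorem exists_preimage_cylinder_eq (hA : IsClopenScheme A) :
    ∃ code : Y → ℕ → β, ∀ x n, code ⁻¹' PiNat.cylinder x n = A (PiNat.res x n) := by
  choose code mem_code using hA.exists_forall_mem_res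
  refine ⟨code, fun x n ↦ ?_⟩
  ext y
  rw [mem_preimage, PiNat.cylinder_eq_res, mem_ofPred]
  refine ⟨fun h ↦ h ▸ mem_code y n, fun hy ↦ ?_⟩
  induction n with
  | zero => rfl
  | succ n ih =>
    have hres : PiNat.res (code y) n = PiNat.res x n := ih (hA.antitone _ _ hy)
    have hcode : y ∈ A (code y n :: PiNat.res x n) := hres ▸ mem_code y (n + 1)
    have hhead : code y n = x n := by
      by_contra hne
      exact disjoint_left.1 (hA.disjoint _ hne) hcode hy
    rw [PiNat.res_succ, PiNat.res_succ, hres, hhead]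

theorem nonempty_homeomorph [T0Space Y] [TopologicalSpace β] [DiscreteTopology β]
    (hA : IsClopenScheme A) (branch_nonempty : ∀ x : ℕ → β, (⋂ n, A (PiNat.res x n)).Nonempty)
    (branch_small : ∀ (x : ℕ → β) (y : Y), (∀ n, y ∈ A (PiNat.res x n)) →
      ∀ O ∈ 𝓝 y, ∃ n, A (PiNat.res x n) ⊆ O) :
    Nonempty (Y ≃ₜ (ℕ → β)) := by
  obtain ⟨code, preimage_code⟩ := hA.exists_preimage_cylinder_eq
  have mem_code (y : Y) (n : ℕ) : y ∈ A (PiNat.res (code y) n) :=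
    preimage_code _ _ ▸ PiNat.self_mem_cylinder (code y) n
  have continuous_code : Continuous code := by
    refine (PiNat.isTopologicalBasis_cylinders fun _ ↦ β).continuous_iff.2 ?_
    rintro _ ⟨x, n, rfl⟩
    exact preimage_code x n ▸ (hA.isClopen _).isOpen
  have isInducing_code : IsInducing code := by
    refine isInducing_iff_nhds.2 fun y ↦ (continuous_code.tendsto y).le_comap.antisymm ?_
    intro O hO
    obtain ⟨n, hn⟩ := branch_small (code y) y (mem_code y) O hO
    exact ⟨PiNat.cylinder (code y) n,
      (PiNat.isOpen_cylinder _ _ _).mem_nhds (PiNat.self_mem_cylinder _ _),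
      (preimage_code _ _).trans_subset hn⟩
  have surjective_code : Function.Surjective code := by
    intro x
    obtain ⟨y, hy⟩ := branch_nonempty x
    refine ⟨y, PiNat.res_injective (funext fun n ↦ ?_)⟩
    have hyn : y ∈ code ⁻¹' PiNat.cylinder x n := preimage_code x n ▸ mem_iInter.1 hy n
    rwa [PiNat.cylinder_eq_res] at hyn
  exact ⟨isInducing_code.isEmbedding.toHomeomorphOfSurjective surjective_code⟩

end IsClopenScheme

section Refinement

variable {Y β : Type*}

/-- The Cantor scheme obtained from the whole space by cutting each cell `U` of level `n` into
the fibres of `label n U : Y → β`; only the values of `label n U` on `U` matter. -/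
def refinementScheme (label : ℕ → Set Y → Y → β) : List β → Set Y
  | [] => univ
  | b :: l =>
    refinementScheme label l ∩ label l.length (refinementScheme label l) ⁻¹' {b}

theorem exists_isClopenScheme_of_split [TopologicalSpace Y] [Nonempty Y]
    (P : ℕ → Set Y → Prop)
    (split : ∀ n U, IsClopen U → U.Nonempty → ∃ g : Y → β, IsLocallyConstant g ∧
      ∀ b, (U ∩ g ⁻¹' {b}).Nonempty ∧ P n (U ∩ g ⁻¹' {b})) :
    ∃ A : List β → Set Y, IsClopenScheme A ∧
      ∀ (x : ℕ → β) n, P n (A (PiNat.res x (n + 1))) := by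
  have : Nonempty (Y → β) := (split 0 univ isClopen_univ univ_nonempty).nonempty
  choose! label label_locConst label_split using split
  let A := refinementScheme label
  have cell_clopen_nonempty (l : List β) : IsClopen (A l) ∧ (A l).Nonempty := by
    induction l with
    | nil => exact ⟨isClopen_univ, univ_nonempty⟩
    | cons b l ih =>
      exact ⟨ih.1.inter ((label_locConst _ _ ih.1 ih.2).isClopen_fiber b),
        (label_split _ _ ih.1 ih.2 b).1⟩
  refine ⟨A, ⟨rfl, fun l ↦ (cell_clopen_nonempty l).1, fun l ↦ (cell_clopen_nonempty l).2,
    fun l b c hbc ↦ ?_, fun l ↦ ?_⟩, fun x n ↦ ?_⟩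
  · exact ((disjoint_singleton.2 hbc).preimage _).mono inter_subset_right inter_subset_right
  · change ⋃ b, A l ∩ label l.length (A l) ⁻¹' {b} = A l
    rw [← inter_iUnion, ← preimage_iUnion, iUnion_of_singleton, preimage_univ, inter_univ]
  · have hcell := cell_clopen_nonempty (PiNat.res x n)
    change P n (A (PiNat.res x n) ∩ label (PiNat.res x n).length (A (PiNat.res x n)) ⁻¹' {x n})
    rw [PiNat.res_length]
    exact (label_split n _ hcell.1 hcell.2 (x n)).2

end Refinement

section Cantor

variable {Y : Type*} [TopologicalSpace Y]

theorem nontrivial_of_isOpen_of_nonempty [PerfectSpace Y] {U : Set Y} (hU : IsOpen U)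
    (hne : U.Nonempty) : U.Nontrivial := by
  obtain ⟨x, hx⟩ := hne
  obtain ⟨y, ⟨hyU, -⟩, hyx⟩ :=
    preperfect_iff_nhds.1 hU.preperfect x hx U (hU.mem_nhds hx)
  exact ⟨x, hx, y, hyU, hyx.symm⟩

theorem exists_isClopen_split [PerfectSpace Y] [TotallySeparatedSpace Y] {U B : Set Y}
    (hU : IsOpen U) (hne : U.Nonempty) (hB : IsClopen B) :
    ∃ C, IsClopen C ∧ ((U ∩ C).Nonempty ∧ (U ∩ C ⊆ B ∨ Disjoint (U ∩ C) B)) ∧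
      ((U \ C).Nonempty ∧ (U \ C ⊆ B ∨ Disjoint (U \ C) B)) := by
  by_cases hUB : U ⊆ B ∨ Disjoint U B
  · obtain ⟨x, hx, y, hy, hxy⟩ := nontrivial_of_isOpen_of_nonempty hU hne
    obtain ⟨C, hC, hxC, hyC⟩ := exists_isClopen_of_totally_separated hxy
    exact ⟨C, hC, ⟨⟨x, hx, hxC⟩, hUB.imp inter_subset_left.trans (·.mono_left inter_subset_left)⟩,
      ⟨y, hy, hyC⟩, hUB.imp sdiff_subset.trans (·.mono_left sdiff_subset)⟩
  · rw [not_or, ← sdiff_nonempty, not_disjoint_iff_nonempty_inter] at hUB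
    exact ⟨B, hB, ⟨hUB.2, .inl inter_subset_right⟩, hUB.1, .inr disjoint_sdiff_left⟩

theorem nonempty_homeomorph_cantor [CompactSpace Y] [T2Space Y] [TotallyDisconnectedSpace Y]
    [SecondCountableTopology Y] [PerfectSpace Y] [Nonempty Y] :
    Nonempty (Y ≃ₜ (ℕ → Bool)) := by
  have : Countable (Clopens Y) := Clopens.countable_iff_secondCountable.2 inferInstance
  obtain ⟨B, hB⟩ := exists_surjective_nat (Clopens Y)
  obtain ⟨A, hA, hAB⟩ : ∃ A : List Bool → Set Y, IsClopenScheme A ∧ ∀ (x : ℕ → Bool) n,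
      A (PiNat.res x (n + 1)) ⊆ B n ∨ Disjoint (A (PiNat.res x (n + 1))) (B n) := by
    refine exists_isClopenScheme_of_split (fun n W ↦ W ⊆ B n ∨ Disjoint W (B n : Set Y)) ?_
    intro n U hU hne
    obtain ⟨C, hC, hin, hout⟩ := exists_isClopen_split hU.isOpen hne (B n).isClopen
    refine ⟨C.boolIndicator, (IsLocallyConstant.iff_continuous _).2
      ((continuous_boolIndicator_iff_isClopen C).2 hC), Bool.forall_bool.2 ?_⟩
    rw [preimage_boolIndicator_true, preimage_boolIndicator_false, ← sdiff_eq]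
    exact ⟨hout, hin⟩
  refine hA.nonempty_homeomorph (fun x ↦ ?_) fun x y hy O hO ↦ ?_
  · exact IsCompact.nonempty_iInter_of_sequence_nonempty_isCompact_isClosed _
      (fun n ↦ hA.antitone _ _) (fun n ↦ hA.nonempty _) (hA.isClopen _).isClosed.isCompact
      (fun n ↦ (hA.isClopen _).isClosed)
  · obtain ⟨V, hV, hyV, hVO⟩ := isTopologicalBasis_isClopen.mem_nhds_iff.1 hO
    obtain ⟨n, hn⟩ := hB ⟨V, hV⟩
    have hBn : (B n : Set Y) = V := congrArg _ hn
    have hsub : A (PiNat.res x (n + 1)) ⊆ B n :=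
      (hAB x n).resolve_right fun h ↦ disjoint_left.1 h (hy (n + 1)) (hBn ▸ hyV)
    exact ⟨n + 1, hsub.trans (hBn.trans_subset hVO)⟩

end Cantor

section Baire

theorem exists_isLocallyConstant_preimage_subset {Y : Type*} [TopologicalSpace Y] [LindelofSpace Y]
    (hY : IsTopologicalBasis {s : Set Y | IsClopen s}) {U : Y → Set Y} (hU : ∀ x, U x ∈ 𝓝 x) :
    ∃ g : Y → ℕ, IsLocallyConstant g ∧ ∀ y, ∃ x, g ⁻¹' {g y} ⊆ U x := by
  classical
  rcases isEmpty_or_nonempty Y with _ | _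
  · exact ⟨fun _ ↦ 0, .const 0, isEmptyElim⟩
  choose V hV mem_V V_subset using fun x ↦ hY.mem_nhds_iff.1 (hU x)
  obtain ⟨t, ht, cover⟩ := countable_cover_nhds fun x ↦ (hV x).isOpen.mem_nhds (mem_V x)
  have ht_ne : t.Nonempty := by
    obtain ⟨x, hx, -⟩ := nonempty_biUnion.1 (cover ▸ univ_nonempty)
    exact ⟨x, hx⟩
  obtain ⟨c, rfl⟩ := ht.exists_eq_range ht_ne
  rw [biUnion_range, iUnion_eq_univ_iff] at cover
  have fiber (n : ℕ) : (fun y ↦ Nat.find (cover y)) ⁻¹' {n} = disjointed (fun k ↦ V (c k)) n :=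
    preimage_find_eq_disjointed (fun k ↦ V (c k)) cover n
  refine ⟨fun y ↦ Nat.find (cover y), IsLocallyConstant.iff_isOpen_fiber.2 fun n ↦ ?_,
    fun y ↦ ⟨c (Nat.find (cover y)), ?_⟩⟩
  · rw [fiber]
    exact (disjointedRec (p := IsClopen) (fun _ _ h ↦ h.diff (hV _)) (hV (c n))).isOpen
  · rw [fiber]
    exact (disjointed_le _ _).trans (V_subset _)

theorem exists_isLocallyConstant_edist_lt {Y : Type*} [PseudoEMetricSpace Y] [LindelofSpace Y]
    (hY : IsTopologicalBasis {s : Set Y | IsClopen s}) {ε : ℝ≥0∞} (hε : 0 < ε) :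
    ∃ g : Y → ℕ, IsLocallyConstant g ∧ ∀ y z, g y = g z → edist y z < ε := by
  obtain ⟨g, hg, hsub⟩ := exists_isLocallyConstant_preimage_subset hY
    fun x ↦ Metric.eball_mem_nhds x (ENNReal.half_pos hε.ne')
  refine ⟨g, hg, fun y z hyz ↦ ?_⟩
  obtain ⟨x, hx⟩ := hsub y
  calc
    edist y z ≤ edist y x + edist z x := edist_triangle_right y z x
    _ < ε / 2 + ε / 2 := ENNReal.add_lt_add (hx rfl) (hx hyz.symm)
    _ = ε := ENNReal.add_halves ε

theorem totallyBounded_of_finite_image {Y ι : Type*} [PseudoEMetricSpace Y] {U : Set Y}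
    (h : ∀ ε > 0, ∃ g : Y → ι, (g '' U).Finite ∧ ∀ y z, g y = g z → edist y z < ε) :
    TotallyBounded U := by
  refine EMetric.totallyBounded_iff.2 fun ε hε ↦ ?_
  obtain ⟨g, hfin, hdist⟩ := h ε hε
  obtain ⟨t, -, ht⟩ := exists_subset_bijOn U g
  refine ⟨t, ht.finite_iff_finite.2 hfin, fun y hy ↦ ?_⟩
  obtain ⟨z, hz, hzy⟩ := ht.surjOn (mem_image_of_mem g hy)
  exact mem_biUnion hz (hdist y z hzy.symm)

theorem exists_isLocallyConstant_fiber_nonempty {Y : Type*} [TopologicalSpace Y] {U : Set Y}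
    {g : Y → ℕ} (hg : IsLocallyConstant g) (hinf : (g '' U).Infinite) :
    ∃ f : Y → ℕ, IsLocallyConstant f ∧ ∀ k, (U ∩ f ⁻¹' {k}).Nonempty ∧
      ∃ m, U ∩ f ⁻¹' {k} ⊆ g ⁻¹' {m} := by
  classical
  -- `Nat.count p` renumbers the values of `g` on `U` increasingly, so that none is skipped.
  let p (m : ℕ) : Prop := m ∈ g '' U
  have count_nth (k : ℕ) : Nat.count p (Nat.nth p k) = k := Nat.count_nth_of_infinite hinf k
  refine ⟨Nat.count p ∘ g, hg.comp _, fun k ↦ ?_⟩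
  obtain ⟨x, hxU, hx⟩ : p (Nat.nth p k) := Nat.nth_mem_of_infinite hinf k
  refine ⟨⟨x, hxU, ?_⟩, Nat.nth p k, ?_⟩
  · simp only [mem_preimage, Function.comp_apply, hx, count_nth, mem_singleton_iff]
  · rintro y ⟨hyU, hy⟩
    exact Nat.count_injective (mem_image_of_mem g hyU) ⟨x, hxU, hx⟩ (hy.trans (count_nth k).symm)

theorem exists_isLocallyConstant_split {Y : Type*} [PseudoEMetricSpace Y] [CompleteSpace Y]
    [LindelofSpace Y] (hY : IsTopologicalBasis {s : Set Y | IsClopen s}) {U : Set Y}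
    (hU : IsClosed U) (hnc : ¬ IsCompact U) {ε : ℝ≥0∞} (hε : 0 < ε) :
    ∃ f : Y → ℕ, IsLocallyConstant f ∧
      ∀ k, (U ∩ f ⁻¹' {k}).Nonempty ∧ Metric.ediam (U ∩ f ⁻¹' {k}) ≤ ε := by
  obtain ⟨δ, hδ, infinite_image⟩ : ∃ δ > 0, ∀ g : Y → ℕ,
      (∀ y z, g y = g z → edist y z < δ) → (g '' U).Infinite := by
    have hntb : ¬ TotallyBounded U := fun h ↦ hnc (h.isCompact_of_isClosed hU)
    by_contra! h
    refine hntb (totallyBounded_of_finite_image (ι := ℕ) fun δ hδ ↦ ?_)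
    obtain ⟨g, hg, hfin⟩ := h δ hδ
    exact ⟨g, hfin, hg⟩
  obtain ⟨g, hg, hdist⟩ := exists_isLocallyConstant_edist_lt hY (lt_min hδ hε)
  obtain ⟨f, hf, hfib⟩ := exists_isLocallyConstant_fiber_nonempty hg
    (infinite_image g fun y z h ↦ (hdist y z h).trans_le (min_le_left _ _))
  refine ⟨f, hf, fun k ↦ ⟨(hfib k).1, Metric.ediam_le fun y hy z hz ↦ ?_⟩⟩
  obtain ⟨m, hm⟩ := (hfib k).2
  have hgyz : g y = g z := (hm hy).trans (hm hz).symm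
  exact (hdist y z hgyz).le.trans (min_le_right _ _)

theorem nonempty_homeomorph_baire {Y : Type*} [TopologicalSpace Y] [PolishSpace Y] [Nonempty Y]
    (hY : IsTopologicalBasis {s : Set Y | IsClopen s})
    (hint : ∀ K : Set Y, IsCompact K → interior K = ∅) :
    Nonempty (Y ≃ₜ (ℕ → ℕ)) := by
  let := upgradeIsCompletelyMetrizable Y
  obtain ⟨A, hA, ediam_le⟩ : ∃ A : List ℕ → Set Y, IsClopenScheme A ∧
      ∀ (x : ℕ → ℕ) n, Metric.ediam (A (PiNat.res x (n + 1))) ≤ (n : ℝ≥0∞)⁻¹ := by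
    refine exists_isClopenScheme_of_split (fun n W ↦ Metric.ediam W ≤ (n : ℝ≥0∞)⁻¹) ?_
    intro n U hU hne
    refine exists_isLocallyConstant_split hY hU.isClosed (fun hK ↦ ?_) (by simp)
    exact hne.ne_empty (hU.isOpen.interior_eq ▸ hint U hK)
  have vanishing : CantorScheme.VanishingDiam A := fun x ↦
    (tendsto_add_atTop_iff_nat 1).1 <| tendsto_of_tendsto_of_tendsto_of_le_of_le tendsto_const_nhds
      ENNReal.tendsto_inv_nat_nhds_zero (fun _ ↦ zero_le) (ediam_le x)
  have total : (CantorScheme.inducedMap A).1 = univ :=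
    (hA.antitone.closureAntitone fun l ↦ (hA.isClopen l).isClosed).map_of_vanishingDiam
      vanishing hA.nonempty
  refine hA.nonempty_homeomorph (fun x ↦ total.superset (mem_univ x)) fun x y hy O hO ↦ ?_
  obtain ⟨ε, hε, hball⟩ := Metric.mem_nhds_iff.1 hO
  obtain ⟨n, hn⟩ := vanishing.dist_lt ε hε x
  exact ⟨n, fun z hz ↦ hball (hn z hz y (hy n))⟩

end Baire

section Pi

variable {ι : Type*} [Infinite ι] {X : ι → Type*} [∀ i, TopologicalSpace (X i)]

theorem exists_forall_update_mem [DecidableEq ι] {x : ∀ i, X i} {U : Set (∀ i, X i)}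
    (hU : U ∈ 𝓝 x) : ∃ i, ∀ a, Function.update x i a ∈ U := by
  rw [nhds_pi, Filter.mem_pi] at hU
  obtain ⟨I, hI, t, ht, hsub⟩ := hU
  obtain ⟨i, hi⟩ := hI.exists_notMem
  refine ⟨i, fun a ↦ hsub fun j hj ↦ ?_⟩
  rw [Function.update_of_ne (ne_of_mem_of_not_mem hj hi)]
  exact mem_of_mem_nhds (ht j)

theorem perfectSpace_pi_s13 [∀ i, Nontrivial (X i)] : PerfectSpace (∀ i, X i) := by
  classical
  refine ⟨preperfect_iff_nhds.2 fun x _ U hU ↦ ?_⟩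
  obtain ⟨i, hi⟩ := exists_forall_update_mem hU
  obtain ⟨a, ha⟩ := exists_ne (x i)
  exact ⟨Function.update x i a, ⟨hi a, mem_univ _⟩, fun h ↦ ha (Function.update_eq_self_iff.1 h)⟩

theorem interior_eq_empty_of_isCompact_pi [∀ i, NoncompactSpace (X i)] {K : Set (∀ i, X i)}
    (hK : IsCompact K) : interior K = ∅ := by
  classical
  refine eq_empty_of_forall_notMem fun x hx ↦ ?_
  obtain ⟨i, hi⟩ := exists_forall_update_mem (mem_interior_iff_mem_nhds.1 hx)
  have image_eq : Function.eval i '' K = univ :=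
    eq_univ_of_forall fun a ↦ ⟨_, hi a, Function.update_self i a x⟩
  exact noncompact_univ (X i) (image_eq ▸ hK.image (continuous_apply i))

end Pi

theorem isTopologicalBasis_clopens_of_isInducing {X Y : Type*} [TopologicalSpace X]
    [TopologicalSpace Y] {f : X → Y} (hf : IsInducing f)
    (hY : IsTopologicalBasis {s : Set Y | IsClopen s}) :
    IsTopologicalBasis {s : Set X | IsClopen s} := by
  refine (hY.isInducing hf).of_isOpen_of_subset (fun s hs ↦ hs.isOpen) ?_
  rintro _ ⟨s, hs, rfl⟩
  exact hs.preimage hf.continuous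

theorem isTopologicalBasis_clopens_pi {ι : Type*} {X : ι → Type*} [∀ i, TopologicalSpace (X i)]
    (hX : ∀ i, IsTopologicalBasis {s : Set (X i) | IsClopen s}) :
    IsTopologicalBasis {s : Set (∀ i, X i) | IsClopen s} := by
  refine (isTopologicalBasis_pi hX).of_isOpen_of_subset (fun s hs ↦ hs.isOpen) ?_
  rintro _ ⟨s, F, hs, rfl⟩
  exact ⟨isClosed_set_pi fun i hi ↦ (hs i hi).isClosed,
    isOpen_set_pi F.finite_toSet fun i hi ↦ (hs i hi).isOpen⟩

theorem polishSpace_iInter {Z ι : Type*} [TopologicalSpace Z] [T2Space Z] [Countable ι]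
    [Nonempty ι] {s : ι → Set Z} (hs : ∀ i, PolishSpace (s i)) :
    PolishSpace (⋂ i, s i : Set Z) := by
  let i₀ : ι := Classical.arbitrary ι
  let diag (x : (⋂ i, s i : Set Z)) (i : ι) : s i := ⟨x, mem_iInter.1 x.2 i⟩
  have isEmbedding_diag : IsEmbedding diag :=
    .of_comp (g := fun h : ∀ i, s i ↦ (h i₀ : Z)) (by fun_prop) (by fun_prop) .subtypeVal
  have range_diag : range diag = ⋂ i, {h : ∀ i, s i | (h i : Z) = h i₀} := by
    refine Subset.antisymm ?_ fun h hh ↦ ?_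
    · rintro _ ⟨x, rfl⟩
      exact mem_iInter.2 fun i ↦ rfl
    · rw [mem_iInter] at hh
      exact ⟨⟨h i₀, mem_iInter.2 fun i ↦ hh i ▸ (h i).2⟩,
        funext fun i ↦ Subtype.ext (hh i).symm⟩
  have isClosed_range_diag : IsClosed (range diag) := by
    rw [range_diag]
    exact isClosed_iInter fun i ↦ isClosed_eq (by fun_prop) (by fun_prop)
  exact IsClosedEmbedding.polishSpace ⟨isEmbedding_diag, isClosed_range_diag⟩

theorem polishSpace_of_isGδ {Z : Type*} [TopologicalSpace Z] [PolishSpace Z] {s : Set Z}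
    (hs : IsGδ s) : PolishSpace s := by
  obtain ⟨U, hU, rfl⟩ := isGδ_iff_eq_iInter_nat.1 hs
  exact polishSpace_iInter fun n ↦ (hU n).polishSpace

theorem pow_homeomorphic_cantor_or_baire_general {X : Type*} [TopologicalSpace X] [PolishSpace X]
    [Nontrivial X] (hX : IsTopologicalBasis {s : Set X | IsClopen s}) :
    (CompactSpace X → Nonempty ((ℕ → X) ≃ₜ (ℕ → Bool))) ∧
    (¬ CompactSpace X → Nonempty ((ℕ → X) ≃ₜ (ℕ → ℕ))) := by
  refine ⟨fun _ ↦ ?_, fun hnc ↦ ?_⟩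
  · have : TotallySeparatedSpace X := totallySeparatedSpace_of_t0_of_basis_clopen hX
    have : PerfectSpace (ℕ → X) := perfectSpace_pi_s13
    exact nonempty_homeomorph_cantor
  · have : NoncompactSpace X := not_compactSpace_iff.1 hnc
    exact nonempty_homeomorph_baire (isTopologicalBasis_clopens_pi fun _ ↦ hX)
      fun K ↦ interior_eq_empty_of_isCompact_pi

/-- If `X` is a `Gδ` subset of the Cantor space and `X^ℕ` has more than one point, then
`X^ℕ` is homeomorphic to the Cantor space if `X` is compact, and to the Baire space
otherwise. -/
theorem pow_homeomorphic_cantor_or_baire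
    (X : Set (ℕ → Bool)) (hG : IsGδ X) (hnt : Nontrivial (ℕ → ↥X)) :
    (IsCompact X → Nonempty ((ℕ → ↥X) ≃ₜ (ℕ → Bool))) ∧
    (¬ IsCompact X → Nonempty ((ℕ → ↥X) ≃ₜ (ℕ → ℕ))) := by
  have : PolishSpace Bool := {}
  have : PolishSpace X := polishSpace_of_isGδ hG
  have : Nontrivial X := Function.nontrivial_of_nontrivial ℕ X
  rw [isCompact_iff_compactSpace]
  exact pow_homeomorphic_cantor_or_baire_general
    (isTopologicalBasis_clopens_of_isInducing .subtypeVal isTopologicalBasis_isClopen)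
end
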